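/- Let A be a densely defined closed operator on a complex Hilbert space H with closed range. Then R(A) = R(A*) if and only if H is the orthogonal direct sum of R(A) and N(A), i.e., R(A) is orthogonal to N(A) and R(A) + N(A) = H. -/

import Mathlib

open scoped InnerProductSpace
open LinearPMap

noncomputable section

variable {H : Type*} [NormedAddCommGroup H] [InnerProductSpace ℂ H] [CompleteSpace H]

/-- The range `R(A)` of a partially defined operator, as a submodule of `H`. -/
def LinearPMap.ran (A : H →ₗ.[ℂ] H) : Submodule ℂ H :=
  LinearMap.range A.toFun

/-- The null space `N(A)` of a partially defined operator, as a submodule of `H`. -/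
def LinearPMap.nul (A : H →ₗ.[ℂ] H) : Submodule ℂ H :=
  (LinearMap.ker A.toFun).map A.domain.subtype

theorem LinearPMap.mem_nul_iff_graph (A : H →ₗ.[ℂ] H) (x : H) :
    x ∈ A.nul ↔ (x, (0 : H)) ∈ A.graph := by
  simp only [LinearPMap.nul, Submodule.mem_map, LinearMap.mem_ker, LinearPMap.mem_graph_iff]
  exact exists_congr fun y => and_comm

theorem LinearPMap.mem_ran_iff_graph (A : H →ₗ.[ℂ] H) (y : H) :
    y ∈ A.ran ↔ ∃ x, (x, y) ∈ A.graph := by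
  simp only [LinearPMap.ran, LinearMap.mem_range, LinearPMap.mem_graph_iff]
  constructor
  · rintro ⟨x, hx⟩
    exact ⟨x, x, rfl, hx⟩
  · rintro ⟨_, x, _, hx⟩
    exact ⟨x, hx⟩

theorem LinearPMap.isClosed_nul (A : H →ₗ.[ℂ] H) (hc : A.IsClosed) :
    _root_.IsClosed (A.nul : Set H) := by
  have h : (A.nul : Set H) = (fun x : H => (x, (0 : H))) ⁻¹' (A.graph : Set (H × H)) := by
    ext x
    exact A.mem_nul_iff_graph x
  rw [h]
  exact _root_.IsClosed.preimage (by fun_prop) hc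

theorem LinearPMap.adjoint_ran_eq (A : H →ₗ.[ℂ] H) (hd : Dense (A.domain : Set H))
    (hc : A.IsClosed) (hr : _root_.IsClosed (A.ran : Set H)) :
    A.adjoint.ran = A.nulᗮ := by
  apply le_antisymm
  · rintro _ ⟨y, rfl⟩
    rw [Submodule.mem_orthogonal']
    rintro _ ⟨x, hx, rfl⟩
    have h := LinearPMap.adjoint_isFormalAdjoint hd y x
    have hx' : A x = 0 := hx
    rw [hx', inner_zero_right] at h
    exact h
  · intro w hw
    rw [Submodule.mem_orthogonal'] at hw
    have hwd : ∀ p q : H × H, p ∈ A.graph → q ∈ A.graph → p.2 = q.2 →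
        ⟪w, p.1⟫_ℂ = ⟪w, q.1⟫_ℂ := by
      intro p q hp hq h
      have h1 := hw (p.1 - q.1) (by
        rw [A.mem_nul_iff_graph]
        have := A.graph.sub_mem hp hq
        have e : p - q = (p.1 - q.1, (0 : H)) := by
          ext <;> simp [h]
        rwa [e] at this)
      rwa [inner_sub_right, sub_eq_zero] at h1
    have : CompleteSpace A.graph := _root_.IsClosed.completeSpace_coe (hs := hc)
    have : CompleteSpace A.ran := _root_.IsClosed.completeSpace_coe (hs := hr)
    let g : A.graph →L[ℂ] A.ran :=
      ((ContinuousLinearMap.snd ℂ H H).comp A.graph.subtypeL).codRestrict A.ran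
        (fun p => (A.mem_ran_iff_graph _).2 ⟨p.1.1, p.2⟩)
    have hg : Function.Surjective g := by
      rintro ⟨y, hy⟩
      obtain ⟨x, hx⟩ := (A.mem_ran_iff_graph _).1 hy
      exact ⟨⟨(x, y), hx⟩, rfl⟩
    obtain ⟨C, hC, hs⟩ := ContinuousLinearMap.exists_preimage_norm_le g hg
    choose s hs1 hs2 using hs
    have hs3 : ∀ y : A.ran, (s y).1.2 = (y : H) := fun y => congrArg Subtype.val (hs1 y)
    let f₀ : A.ran →ₗ[ℂ] ℂ :=
      { toFun := fun y => ⟪w, (s y).1.1⟫_ℂ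
        map_add' := fun y z => by
          rw [← inner_add_right]
          refine hwd (s (y + z)).1 ((s y).1 + (s z).1) (s (y + z)).2
            (A.graph.add_mem (s y).2 (s z).2) ?_
          simp [hs3]
        map_smul' := fun c y => by
          rw [RingHom.id_apply, smul_eq_mul, ← inner_smul_right]
          refine hwd (s (c • y)).1 (c • (s y).1) (s (c • y)).2
            (A.graph.smul_mem c (s y).2) ?_
          simp [hs3] }
    let f : A.ran →L[ℂ] ℂ := f₀.mkContinuous (‖w‖ * C) (fun y => by
      calc ‖f₀ y‖ ≤ ‖w‖ * ‖(s y).1.1‖ := norm_inner_le_norm _ _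
        _ ≤ ‖w‖ * (C * ‖y‖) := by
          gcongr
          exact (norm_fst_le (s y).1).trans (hs2 y)
        _ = ‖w‖ * C * ‖y‖ := by ring)
    let y₀ : A.ran := (InnerProductSpace.toDual ℂ A.ran).symm f
    have hy : ∀ x : A.domain, ⟪w, (x : H)⟫_ℂ = ⟪(y₀ : H), A x⟫_ℂ := by
      intro x
      have hx : A x ∈ A.ran := ⟨x, rfl⟩
      have h : ⟪y₀, (⟨A x, hx⟩ : A.ran)⟫_ℂ = f ⟨A x, hx⟩ :=
        InnerProductSpace.toDual_symm_apply
      rw [Submodule.coe_inner] at h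
      refine Eq.trans ?_ h.symm
      exact hwd ((x : H), A x) (s ⟨A x, hx⟩).1 (A.mem_graph x) (s _).2 (hs3 ⟨A x, hx⟩).symm
    have hmem := LinearPMap.mem_adjoint_domain_of_exists (T := A) (y₀ : H) ⟨w, hy⟩
    exact ⟨⟨y₀, hmem⟩, LinearPMap.adjoint_apply_eq hd ⟨y₀, hmem⟩ hy⟩

/-- Let `A` be a densely defined closed operator on a complex Hilbert
space `H` with closed range. Then `R(A) = R(A*)` if and only if `H` is the orthogonal
direct sum of `R(A)` and `N(A)`, i.e. `R(A) ⟂ N(A)` and `R(A) + N(A) = H`. -/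
theorem stmt3 (A : H →ₗ.[ℂ] H) (hd : Dense (A.domain : Set H)) (hc : A.IsClosed)
    (hr : IsClosed (A.ran : Set H)) :
    A.ran = A.adjoint.ran ↔ (A.ran ⟂ A.nul ∧ A.ran ⊔ A.nul = ⊤) := by
  rw [A.adjoint_ran_eq hd hc hr]
  have : CompleteSpace A.nul :=
    _root_.IsClosed.completeSpace_coe (hs := A.isClosed_nul hc)
  constructor
  · intro h
    rw [h]
    refine ⟨(Submodule.isOrtho_orthogonal_right A.nul).symm, ?_⟩
    rw [sup_comm]
    exact Submodule.sup_orthogonal_of_hasOrthogonalProjection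
  · rintro ⟨h1, h2⟩
    have h1' : A.ran ≤ A.nulᗮ := h1
    refine le_antisymm h1' ?_
    intro x hx
    have hxt : x ∈ A.ran ⊔ A.nul := by rw [h2]; trivial
    obtain ⟨r, hr', n, hn, rfl⟩ := Submodule.mem_sup.1 hxt
    have hn' : n ∈ A.nulᗮ := by
      have := A.nulᗮ.sub_mem hx (h1' hr')
      rwa [add_sub_cancel_left] at this
    have hn0 : n = 0 := inner_self_eq_zero.1 (hn' n hn)
    rwa [hn0, add_zero]
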